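/- Let X and Y be centered Gaussian vectors in ℝⁿ with E[X_i²] = E[Y_i²] for all i and Cov(X_i, X_j) ≤ Cov(Y_i, Y_j) for all i, j. For 1 ≤ ℓ ≤ n define S_ℓ(Z) := max{∑_{i∈I} Z_i : I ⊆ {1,…,n}, |I| = ℓ}. Then E[S_ℓ(X)] ≥ E[S_ℓ(Y)] for every ℓ = 1,…,n. -/

import Mathlib

open MeasureTheory ProbabilityTheory

/-- `X` is a centered Gaussian vector: every linear combination of its coordinates is a
centered real Gaussian (with its own variance). -/
def IsCenteredGaussianVec {Ω : Type*} [MeasurableSpace Ω] (P : Measure Ω) {n : ℕ}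
    (X : Fin n → Ω → ℝ) : Prop :=
  ∀ a : Fin n → ℝ, Measure.map (fun ω => ∑ i, a i * X i ω) P
    = gaussianReal 0 (Real.toNNReal (∫ ω, (∑ i, a i * X i ω) ^ 2 ∂P))

/-!
Adding to a Gaussian vector an independent increment `g • u`, with `g` standard Gaussian, adds the
rank-one matrix `u uᵀ` to its covariance. Since `g` is symmetric, the mean of `f` increases when
`u` is replaced by `v` as soon as `f (w + a u) + f (w - a u) ≤ f (w + a v) + f (w - a v)` for all
`w` and `a`. With `A` and `B` the covariance matrices of `X` and `Y`, the difference `B - A` is a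
sum of matrices `u uᵀ - v vᵀ`: for `i ≠ j` with `u ∥ e_i + e_j` and `v ∥ e_i - e_j`, and on the
diagonal with `u = 0` and `v ∥ e_i`. As `B - ∑ u uᵀ = A - ∑ v vᵀ` may fail to be positive
semidefinite, one walks from `A` to `B` in `N` equal steps, keeping a summand `N⁻¹ ∑ v vᵀ` in the
covariance, and lets `N → ∞`.

For `S_ℓ` the diagonal inequality is convexity, and the off-diagonal one is basis exchange: two
`ℓ`-subsets optimal for `w + a (e_i + e_j)` and `w - a (e_i + e_j)` can be rearranged, without
changing their multiset sum, into two candidates for `w + a (e_i - e_j)` and `w - a (e_i - e_j)`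
that do at least as well.
-/

section OuterSquare

open Matrix
open scoped RealInnerProductSpace

variable {ι : Type*}

/-- The rank-one matrix `u uᵀ`, the covariance matrix of `g • u` for a standard Gaussian `g`. -/
def outerSquare (u : EuclideanSpace ℝ ι) : Matrix ι ι ℝ :=
  vecMulVec u.ofLp u.ofLp

lemma outerSquare_neg (u : EuclideanSpace ℝ ι) : outerSquare (-u) = outerSquare u := by
  simp [outerSquare, neg_vecMulVec, vecMulVec_neg]

lemma outerSquare_smul (a : ℝ) (u : EuclideanSpace ℝ ι) :
    outerSquare (a • u) = a ^ 2 • outerSquare u := by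
  simp [outerSquare, smul_vecMulVec, vecMulVec_smul, smul_smul, sq]

lemma sum_outerSquare_sqrt_smul {κ : Type*} {t : ℝ} (ht : 0 ≤ t) (u : κ → EuclideanSpace ℝ ι)
    (F : Finset κ) : ∑ p ∈ F, outerSquare (√t • u p) = t • ∑ p ∈ F, outerSquare (u p) := by
  simp only [outerSquare_smul, Real.sq_sqrt ht, Finset.smul_sum]

lemma outerSquare_add_sub_outerSquare_sub (x y : EuclideanSpace ℝ ι) :
    outerSquare (x + y) - outerSquare (x - y)
      = (2 : ℝ) • (vecMulVec x.ofLp y.ofLp + vecMulVec y.ofLp x.ofLp) := by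
  ext i j
  simp only [outerSquare, Matrix.sub_apply, Matrix.smul_apply, Matrix.add_apply, vecMulVec_apply,
    PiLp.add_apply, PiLp.sub_apply, smul_eq_mul]
  ring

lemma posSemidef_outerSquare [Finite ι] (u : EuclideanSpace ℝ ι) : (outerSquare u).PosSemidef := by
  simpa [outerSquare] using posSemidef_vecMulVec_self_star u.ofLp

lemma dotProduct_outerSquare_mulVec [Fintype ι] (u x : EuclideanSpace ℝ ι) :
    x ⬝ᵥ outerSquare u *ᵥ x = ⟪u, x⟫ ^ 2 := by
  rw [outerSquare, vecMulVec_mulVec, EuclideanSpace.inner_eq_star_dotProduct]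
  simp [dotProduct_comm u.ofLp, sq]

end OuterSquare

section GaussianLaws

open Matrix
open scoped RealInnerProductSpace NNReal

variable {ι : Type*} [Fintype ι] [DecidableEq ι] {S T : Matrix ι ι ℝ}

lemma multivariateGaussian_add (μ ν : EuclideanSpace ℝ ι) (hS : S.PosSemidef)
    (hT : T.PosSemidef) :
    multivariateGaussian (μ + ν) (S + T)
      = multivariateGaussian μ S ∗ multivariateGaussian ν T := by
  apply Measure.ext_of_charFun
  ext x
  rw [charFun_conv, charFun_multivariateGaussian hS, charFun_multivariateGaussian hT,
    charFun_multivariateGaussian (hS.add hT), ← Complex.exp_add, add_mulVec, dotProduct_add,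
    inner_add_right]
  push_cast
  ring_nf

lemma map_smul_multivariateGaussian (c : ℝ) (μ : EuclideanSpace ℝ ι) (hS : S.PosSemidef) :
    (multivariateGaussian μ S).map (c • ·) = multivariateGaussian (c • μ) (c ^ 2 • S) := by
  have := Measure.isProbabilityMeasure_map (μ := multivariateGaussian μ S)
    (f := fun z ↦ c • z) (by fun_prop)
  apply Measure.ext_of_charFun
  ext x
  rw [charFun_map_smul, charFun_multivariateGaussian hS,
    charFun_multivariateGaussian (hS.smul (sq_nonneg c)), real_inner_smul_left,
    real_inner_smul_right]
  simp only [WithLp.ofLp_smul, mulVec_smul, smul_mulVec, dotProduct_smul, smul_dotProduct,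
    smul_smul, sq]

lemma map_smul_const_gaussianReal (m : ℝ) (v : ℝ≥0) (u : EuclideanSpace ℝ ι) :
    (gaussianReal m v).map (· • u) = multivariateGaussian (m • u) ((v : ℝ) • outerSquare u) := by
  have hmeas : Measurable (fun g : ℝ ↦ g • u) := by fun_prop
  have := Measure.isProbabilityMeasure_map (μ := gaussianReal m v) hmeas.aemeasurable
  apply Measure.ext_of_charFun
  ext x
  calc charFun ((gaussianReal m v).map (· • u)) x
      = charFun (gaussianReal m v) ⟪u, x⟫ := by
        rw [charFun_apply, integral_map hmeas.aemeasurable (by fun_prop), charFun_apply_real]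
        simp [real_inner_smul_left, mul_comm]
    _ = charFun (multivariateGaussian (m • u) ((v : ℝ) • outerSquare u)) x := by
        rw [charFun_gaussianReal,
          charFun_multivariateGaussian ((posSemidef_outerSquare u).smul v.coe_nonneg), smul_mulVec,
          dotProduct_smul, dotProduct_outerSquare_mulVec, real_inner_smul_right,
          real_inner_comm u x, smul_eq_mul]
        push_cast
        ring_nf

lemma hasLaw_fst_add_snd {E F : Type*} [AddMonoid E] [MeasurableSpace E] [MeasurableAdd₂ E]
    [MeasurableSpace F] (μ : Measure E) (ν : Measure F) [IsProbabilityMeasure μ]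
    [IsProbabilityMeasure ν] {g : F → E} (hg : Measurable g) :
    HasLaw (fun p : E × F ↦ p.1 + g p.2) (μ ∗ ν.map g) (μ.prod ν) := by
  have := Measure.isProbabilityMeasure_map (μ := ν) hg.aemeasurable
  exact (indepFun_prod measurable_id hg).hasLaw_fun_add measurePreserving_fst.hasLaw
    ((hg.measurePreserving ν).comp measurePreserving_snd).hasLaw

lemma hasLaw_fst_add_snd_smul (hS : S.PosSemidef) (u : EuclideanSpace ℝ ι) :
    HasLaw (fun p : EuclideanSpace ℝ ι × ℝ ↦ p.1 + p.2 • u)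
      (multivariateGaussian 0 (S + outerSquare u))
      ((multivariateGaussian 0 S).prod (gaussianReal 0 1)) := by
  have h := hasLaw_fst_add_snd (multivariateGaussian 0 S) (gaussianReal 0 1)
    (show Measurable fun g : ℝ ↦ g • u by fun_prop)
  rwa [map_smul_const_gaussianReal, zero_smul, NNReal.coe_one, one_smul,
    ← multivariateGaussian_add 0 0 hS (posSemidef_outerSquare u), add_zero] at h

lemma hasLaw_fst_sub_snd_smul (hS : S.PosSemidef) (u : EuclideanSpace ℝ ι) :
    HasLaw (fun p : EuclideanSpace ℝ ι × ℝ ↦ p.1 - p.2 • u)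
      (multivariateGaussian 0 (S + outerSquare u))
      ((multivariateGaussian 0 S).prod (gaussianReal 0 1)) := by
  simpa only [outerSquare_neg, smul_neg, ← sub_eq_add_neg] using hasLaw_fst_add_snd_smul hS (-u)

lemma hasLaw_fst_add_smul_snd (hS : S.PosSemidef) (hT : T.PosSemidef) (c : ℝ) :
    HasLaw (fun p : EuclideanSpace ℝ ι × EuclideanSpace ℝ ι ↦ p.1 + c • p.2)
      (multivariateGaussian 0 (S + c ^ 2 • T))
      ((multivariateGaussian 0 S).prod (multivariateGaussian 0 T)) := by
  have h := hasLaw_fst_add_snd (multivariateGaussian 0 S) (multivariateGaussian 0 T)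
    (show Measurable fun z : EuclideanSpace ℝ ι ↦ c • z by fun_prop)
  rwa [map_smul_multivariateGaussian c 0 hT, smul_zero,
    ← multivariateGaussian_add 0 0 hS (hT.smul (sq_nonneg c)), add_zero] at h

end GaussianLaws

section SymmIncrement

/-- The symmetric second difference of `f` in the direction `u` is at most the one in the
direction `v`, at every base point and every scale. It is what makes replacing an independent
increment `g • u`, with `g` a symmetric random variable, by `g • v` increase the mean of `f`. -/
def SymmIncrementLE {E : Type*} [AddCommGroup E] [Module ℝ E] (f : E → ℝ) (u v : E) : Prop :=
  ∀ (w : E) (a : ℝ), f (w + a • u) + f (w - a • u) ≤ f (w + a • v) + f (w - a • v)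

lemma SymmIncrementLE.smul {E : Type*} [AddCommGroup E] [Module ℝ E] {f : E → ℝ} {u v : E}
    (h : SymmIncrementLE f u v) (c : ℝ) : SymmIncrementLE f (c • u) (c • v) := fun w a ↦ by
  simpa only [smul_smul] using h w (a * c)

end SymmIncrement

section MatrixEntries

open Matrix

variable {ι : Type*} [DecidableEq ι]

/-- A vector `u` which, with `v := entryMinus i j d`, writes the symmetric matrix with entries
`d / 2` at `(i, j)` and `(j, i)` as `u uᵀ - v vᵀ`. -/
noncomputable def entryPlus (i j : ι) (d : ℝ) : EuclideanSpace ℝ ι :=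
  (√|d| / 2) • (EuclideanSpace.single i 1 + (SignType.sign d : ℝ) • EuclideanSpace.single j 1)

/-- The vector subtracted in the decomposition described at `entryPlus`. -/
noncomputable def entryMinus (i j : ι) (d : ℝ) : EuclideanSpace ℝ ι :=
  (√|d| / 2) • (EuclideanSpace.single i 1 - (SignType.sign d : ℝ) • EuclideanSpace.single j 1)

lemma outerSquare_entryPlus_sub_outerSquare_entryMinus (i j : ι) (d : ℝ) :
    outerSquare (entryPlus i j d) - outerSquare (entryMinus i j d)
      = (2 : ℝ)⁻¹ • (single i j d + single j i d) := by
  have hd : (√|d| / 2) ^ 2 * (2 * SignType.sign d) = 2⁻¹ * d := by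
    rw [div_pow, Real.sq_sqrt (abs_nonneg d)]
    linear_combination (2 : ℝ)⁻¹ * abs_mul_sign d
  rw [entryPlus, entryMinus, outerSquare_smul, outerSquare_smul, ← smul_sub,
    outerSquare_add_sub_outerSquare_sub]
  simp only [WithLp.ofLp_smul, vecMulVec_smul, smul_vecMulVec, ← smul_add, smul_smul,
    PiLp.ofLp_single, ← single_eq_single_vecMulVec_single]
  simp [smul_single, hd]

lemma sum_outerSquare_entryPlus_sub_outerSquare_entryMinus [Fintype ι] {D : Matrix ι ι ℝ}
    (hD : D.IsSymm) :
    ∑ p : ι × ι, (outerSquare (entryPlus p.1 p.2 (D p.1 p.2))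
      - outerSquare (entryMinus p.1 p.2 (D p.1 p.2))) = D := by
  have htranspose : ∑ i, ∑ j, single j i (D i j) = D := by
    rw [Finset.sum_comm]
    simp only [hD.apply]
    exact (matrix_eq_sum_single D).symm
  simp only [outerSquare_entryPlus_sub_outerSquare_entryMinus, Fintype.sum_prod_type,
    ← Finset.smul_sum, Finset.sum_add_distrib, ← matrix_eq_sum_single, htranspose]
  module

lemma symmIncrementLE_entry_of_nonneg {f : EuclideanSpace ℝ ι → ℝ} {i j : ι} {d : ℝ} (hd : 0 ≤ d)
    (h : SymmIncrementLE f (EuclideanSpace.single i 1 + EuclideanSpace.single j 1)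
      (EuclideanSpace.single i 1 - EuclideanSpace.single j 1)) :
    SymmIncrementLE f (entryPlus i j d) (entryMinus i j d) := by
  obtain rfl | hd := hd.eq_or_lt
  · simp [SymmIncrementLE, entryPlus, entryMinus]
  · simpa [entryPlus, entryMinus, sign_pos hd] using h.smul (√|d| / 2)

lemma symmIncrementLE_entry_of_nonpos {f : EuclideanSpace ℝ ι → ℝ} {i : ι} {d : ℝ} (hd : d ≤ 0)
    (h : SymmIncrementLE f 0 (EuclideanSpace.single i 1)) :
    SymmIncrementLE f (entryPlus i i d) (entryMinus i i d) := by
  obtain rfl | hd := hd.eq_or_lt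
  · simp [SymmIncrementLE, entryPlus, entryMinus]
  · simpa [entryPlus, entryMinus, sign_neg hd, ← two_smul ℝ, smul_smul] using h.smul (√|d|)

end MatrixEntries

section Kahane

open Matrix Filter Topology
open scoped NNReal

lemma integrable_of_lipschitzWith {E : Type*} [NormedAddCommGroup E] [MeasurableSpace E]
    [BorelSpace E] {μ : Measure E} [IsFiniteMeasure μ] {f : E → ℝ} {K : ℝ≥0}
    (hf : LipschitzWith K f) (hμ : Integrable id μ) : Integrable f μ := by
  refine ((integrable_const |f 0|).add (hμ.norm.const_mul (K : ℝ))).mono'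
    hf.continuous.aestronglyMeasurable (ae_of_all _ fun x ↦ ?_)
  have hx := hf.norm_sub_le x 0
  rw [sub_zero] at hx
  calc ‖f x‖ ≤ ‖f 0‖ + ‖f x - f 0‖ := norm_le_norm_add_norm_sub' _ _
    _ ≤ |f 0| + K * ‖x‖ := by rw [Real.norm_eq_abs]; gcongr

lemma integrable_comp_of_hasLaw {Ω E : Type*} [MeasurableSpace Ω] [MeasurableSpace E]
    {P : Measure Ω} {μ : Measure E} {X : Ω → E} {f : E → ℝ} (hX : HasLaw X μ P)
    (hf : Integrable f μ) : Integrable (fun ω ↦ f (X ω)) P :=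
  (hX.map_eq ▸ hf).comp_aemeasurable hX.aemeasurable

lemma integral_comp_of_hasLaw {Ω E : Type*} [MeasurableSpace Ω] [MeasurableSpace E]
    {P : Measure Ω} {μ : Measure E} {X : Ω → E} {f : E → ℝ} (hX : HasLaw X μ P)
    (hf : Integrable f μ) : ∫ ω, f (X ω) ∂P = ∫ x, f x ∂μ :=
  hX.integral_comp hf.aestronglyMeasurable

variable {ι : Type*} [Fintype ι] [DecidableEq ι] {S T : Matrix ι ι ℝ}
  {f : EuclideanSpace ℝ ι → ℝ} {K : ℝ≥0}

lemma integrable_multivariateGaussian_of_lipschitzWith (hf : LipschitzWith K f)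
    (μ : EuclideanSpace ℝ ι) (S : Matrix ι ι ℝ) : Integrable f (multivariateGaussian μ S) :=
  integrable_of_lipschitzWith hf IsGaussian.integrable_id

lemma integrable_symmIncrement (hf : LipschitzWith K f) (hS : S.PosSemidef)
    (u : EuclideanSpace ℝ ι) :
    Integrable (fun p : EuclideanSpace ℝ ι × ℝ ↦ f (p.1 + p.2 • u) + f (p.1 - p.2 • u))
      ((multivariateGaussian 0 S).prod (gaussianReal 0 1)) :=
  have hint := integrable_multivariateGaussian_of_lipschitzWith hf 0 (S + outerSquare u)
  (integrable_comp_of_hasLaw (hasLaw_fst_add_snd_smul hS u) hint).add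
    (integrable_comp_of_hasLaw (hasLaw_fst_sub_snd_smul hS u) hint)

lemma integral_symmIncrement (hf : LipschitzWith K f) (hS : S.PosSemidef)
    (u : EuclideanSpace ℝ ι) :
    ∫ p : EuclideanSpace ℝ ι × ℝ, (f (p.1 + p.2 • u) + f (p.1 - p.2 • u))
        ∂(multivariateGaussian 0 S).prod (gaussianReal 0 1)
      = 2 * ∫ x, f x ∂multivariateGaussian 0 (S + outerSquare u) := by
  have hint := integrable_multivariateGaussian_of_lipschitzWith hf 0 (S + outerSquare u)
  have hadd := hasLaw_fst_add_snd_smul hS u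
  have hsub := hasLaw_fst_sub_snd_smul hS u
  rw [integral_add (integrable_comp_of_hasLaw hadd hint) (integrable_comp_of_hasLaw hsub hint),
    integral_comp_of_hasLaw hadd hint, integral_comp_of_hasLaw hsub hint, two_mul]

lemma integral_add_outerSquare_le (hf : LipschitzWith K f) (hS : S.PosSemidef)
    {u v : EuclideanSpace ℝ ι} (huv : SymmIncrementLE f u v) :
    ∫ x, f x ∂multivariateGaussian 0 (S + outerSquare u)
      ≤ ∫ x, f x ∂multivariateGaussian 0 (S + outerSquare v) := by
  refine le_of_mul_le_mul_left ?_ two_pos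
  rw [← integral_symmIncrement hf hS, ← integral_symmIncrement hf hS]
  exact integral_mono (integrable_symmIncrement hf hS u) (integrable_symmIncrement hf hS v)
    fun p ↦ huv p.1 p.2

lemma integral_add_sum_outerSquare_le {κ : Type*} (hf : LipschitzWith K f) (hS : S.PosSemidef)
    {u v : κ → EuclideanSpace ℝ ι} (huv : ∀ p, SymmIncrementLE f (u p) (v p)) (F : Finset κ) :
    ∫ x, f x ∂multivariateGaussian 0 (S + ∑ p ∈ F, outerSquare (u p))
      ≤ ∫ x, f x ∂multivariateGaussian 0 (S + ∑ p ∈ F, outerSquare (v p)) := by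
  classical
  induction F using Finset.induction_on generalizing S with
  | empty => simp
  | insert p F hp ih =>
    rw [Finset.sum_insert hp, Finset.sum_insert hp, ← add_assoc, ← add_assoc]
    calc ∫ x, f x ∂multivariateGaussian 0 (S + outerSquare (u p) + ∑ q ∈ F, outerSquare (u q))
        ≤ ∫ x, f x ∂multivariateGaussian 0 (S + outerSquare (u p) + ∑ q ∈ F, outerSquare (v q)) :=
          ih (hS.add (posSemidef_outerSquare _))
      _ ≤ ∫ x, f x ∂multivariateGaussian 0
            (S + outerSquare (v p) + ∑ q ∈ F, outerSquare (v q)) := by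
          rw [add_right_comm S (outerSquare (u p)), add_right_comm S (outerSquare (v p))]
          exact integral_add_outerSquare_le hf
            (hS.add (posSemidef_sum _ fun q _ ↦ posSemidef_outerSquare _)) (huv p)

lemma integral_add_smul_sum_outerSquare_le {κ : Type*} (hf : LipschitzWith K f)
    (hS : S.PosSemidef) {u v : κ → EuclideanSpace ℝ ι}
    (huv : ∀ p, SymmIncrementLE f (u p) (v p)) (F : Finset κ) {t : ℝ} (ht : 0 ≤ t) :
    ∫ x, f x ∂multivariateGaussian 0 (S + t • ∑ p ∈ F, outerSquare (u p))
      ≤ ∫ x, f x ∂multivariateGaussian 0 (S + t • ∑ p ∈ F, outerSquare (v p)) := by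
  rw [← sum_outerSquare_sqrt_smul ht, ← sum_outerSquare_sqrt_smul ht]
  exact integral_add_sum_outerSquare_le hf hS (fun p ↦ (huv p).smul √t) F

lemma abs_integral_add_sq_smul_sub_le (hf : LipschitzWith K f) (hS : S.PosSemidef)
    (hT : T.PosSemidef) (c : ℝ) :
    |∫ x, f x ∂multivariateGaussian 0 (S + c ^ 2 • T) - ∫ x, f x ∂multivariateGaussian 0 S|
      ≤ |c| * (K * ∫ z, ‖z‖ ∂multivariateGaussian 0 T) := by
  have hint := integrable_multivariateGaussian_of_lipschitzWith hf (0 : EuclideanSpace ℝ ι)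
  have hlaw := hasLaw_fst_add_smul_snd hS hT c
  have hfst := (measurePreserving_fst (μ := multivariateGaussian 0 S)
    (ν := multivariateGaussian 0 T)).hasLaw
  have hsnd := (measurePreserving_snd (μ := multivariateGaussian 0 S)
    (ν := multivariateGaussian 0 T)).hasLaw
  have hnorm : Integrable norm (multivariateGaussian 0 T) := IsGaussian.integrable_id.norm
  rw [← integral_comp_of_hasLaw hlaw (hint _), ← integral_comp_of_hasLaw hfst (hint _),
    ← integral_comp_of_hasLaw hsnd hnorm, ← integral_const_mul, ← integral_const_mul,
    ← integral_sub (integrable_comp_of_hasLaw hlaw (hint _))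
      (integrable_comp_of_hasLaw hfst (hint _))]
  refine norm_integral_le_of_norm_le (G := ℝ)
    (((integrable_comp_of_hasLaw hsnd hnorm).const_mul _).const_mul _) (ae_of_all _ fun p ↦ ?_)
  calc ‖f (p.1 + c • p.2) - f p.1‖ ≤ K * ‖p.1 + c • p.2 - p.1‖ := hf.norm_sub_le _ _
    _ = |c| * (K * ‖p.2‖) := by
      rw [add_sub_cancel_left, norm_smul, Real.norm_eq_abs, mul_left_comm]

lemma tendsto_integral_add_smul (hf : LipschitzWith K f) (hS : S.PosSemidef)
    (hT : T.PosSemidef) :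
    Tendsto (fun t : ℝ ↦ ∫ x, f x ∂multivariateGaussian 0 (S + t • T)) (𝓝[≥] 0)
      (𝓝 (∫ x, f x ∂multivariateGaussian 0 S)) := by
  set C := K * ∫ z, ‖z‖ ∂multivariateGaussian 0 T
  have hbound : Tendsto (fun t : ℝ ↦ √t * C) (𝓝[≥] 0) (𝓝 0) := by
    have : Continuous fun t : ℝ ↦ √t * C := by fun_prop
    simpa using (this.tendsto 0).mono_left nhdsWithin_le_nhds
  refine tendsto_iff_norm_sub_tendsto_zero.2 (squeeze_zero' (by simp) ?_ hbound)
  filter_upwards [self_mem_nhdsWithin] with t ht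
  simpa [Real.sq_sqrt ht, abs_of_nonneg (Real.sqrt_nonneg t)]
    using abs_integral_add_sq_smul_sub_le hf hS hT √t

lemma integral_lineMap_add_le {κ : Type*} [Fintype κ] {A B : Matrix ι ι ℝ}
    (hf : LipschitzWith K f) (hA : A.PosSemidef) (hB : B.PosSemidef)
    {u v : κ → EuclideanSpace ℝ ι} (huv : ∀ p, SymmIncrementLE f (u p) (v p))
    (hAB : B + ∑ p, outerSquare (v p) = A + ∑ p, outerSquare (u p)) {s t : ℝ} (hs : 0 ≤ s)
    (ht₀ : 0 ≤ t) (ht₁ : t ≤ 1) :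
    ∫ x, f x ∂multivariateGaussian 0
        (AffineMap.lineMap A B (t + s) + s • ∑ p, outerSquare (v p))
      ≤ ∫ x, f x ∂multivariateGaussian 0
          (AffineMap.lineMap A B t + s • ∑ p, outerSquare (v p)) := by
  have hpsd : (AffineMap.lineMap A B t).PosSemidef := by
    rw [AffineMap.lineMap_apply_module]
    exact (hA.smul (sub_nonneg.2 ht₁)).add (hB.smul ht₀)
  have hstep : AffineMap.lineMap A B (t + s) + s • ∑ p, outerSquare (v p)
      = AffineMap.lineMap A B t + s • ∑ p, outerSquare (u p) := by
    rw [AffineMap.lineMap_apply_module', AffineMap.lineMap_apply_module',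
      ← sub_eq_zero, ← smul_zero s, ← sub_eq_zero.2 hAB]
    module
  rw [hstep]
  exact integral_add_smul_sum_outerSquare_le hf hpsd huv _ hs

lemma integral_add_inv_smul_le {κ : Type*} [Fintype κ] {A B : Matrix ι ι ℝ}
    (hf : LipschitzWith K f) (hA : A.PosSemidef) (hB : B.PosSemidef)
    {u v : κ → EuclideanSpace ℝ ι} (huv : ∀ p, SymmIncrementLE f (u p) (v p))
    (hAB : B + ∑ p, outerSquare (v p) = A + ∑ p, outerSquare (u p)) {N : ℕ} (hN : N ≠ 0) :
    ∫ x, f x ∂multivariateGaussian 0 (B + (N : ℝ)⁻¹ • ∑ p, outerSquare (v p))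
      ≤ ∫ x, f x ∂multivariateGaussian 0 (A + (N : ℝ)⁻¹ • ∑ p, outerSquare (v p)) := by
  have hN₀ : (N : ℝ) ≠ 0 := Nat.cast_ne_zero.2 hN
  have chain : ∀ k ≤ N,
      ∫ x, f x ∂multivariateGaussian 0
          (AffineMap.lineMap A B (k * (N : ℝ)⁻¹) + (N : ℝ)⁻¹ • ∑ p, outerSquare (v p))
        ≤ ∫ x, f x ∂multivariateGaussian 0 (A + (N : ℝ)⁻¹ • ∑ p, outerSquare (v p)) := by
    intro k
    induction k with
    | zero => simp
    | succ k ih =>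
      intro hk
      have hkN : (k : ℝ) * (N : ℝ)⁻¹ ≤ 1 :=
        mul_inv_le_one_of_le₀ (by exact_mod_cast (Nat.lt_of_succ_le hk).le) (by positivity)
      rw [Nat.cast_succ, add_one_mul]
      exact (integral_lineMap_add_le hf hA hB huv hAB (by positivity) (by positivity) hkN).trans
        (ih (Nat.le_of_succ_le hk))
  simpa [hN₀] using chain N le_rfl

lemma integral_le_of_add_sum_outerSquare_eq {κ : Type*} [Fintype κ] {A B : Matrix ι ι ℝ}
    (hf : LipschitzWith K f) (hA : A.PosSemidef) (hB : B.PosSemidef)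
    {u v : κ → EuclideanSpace ℝ ι} (huv : ∀ p, SymmIncrementLE f (u p) (v p))
    (hAB : B + ∑ p, outerSquare (v p) = A + ∑ p, outerSquare (u p)) :
    ∫ x, f x ∂multivariateGaussian 0 B ≤ ∫ x, f x ∂multivariateGaussian 0 A := by
  have hV : (∑ p, outerSquare (v p)).PosSemidef :=
    posSemidef_sum _ fun p _ ↦ posSemidef_outerSquare _
  have hinv : Tendsto (fun N : ℕ ↦ (N : ℝ)⁻¹) atTop (𝓝[≥] 0) :=
    (tendsto_inv_atTop_nhdsGT_zero.comp tendsto_natCast_atTop_atTop).mono_right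
      (nhdsWithin_mono _ Set.Ioi_subset_Ici_self)
  refine le_of_tendsto_of_tendsto ((tendsto_integral_add_smul hf hB hV).comp hinv)
    ((tendsto_integral_add_smul hf hA hV).comp hinv) ?_
  filter_upwards [eventually_ne_atTop 0] with N hN
  exact integral_add_inv_smul_le hf hA hB huv hAB hN

/-- Kahane's inequality, with the hypotheses `∂ᵢ² f ≥ 0` and `∂ᵢ ∂ⱼ f ≤ 0` for `i ≠ j` replaced by
finite differences, so that `f` need not be smooth. -/
theorem integral_multivariateGaussian_le {A B : Matrix ι ι ℝ} (hf : LipschitzWith K f)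
    (hdiag : ∀ i, SymmIncrementLE f 0 (EuclideanSpace.single i 1))
    (hoff : ∀ i j, i ≠ j → SymmIncrementLE f
      (EuclideanSpace.single i 1 + EuclideanSpace.single j 1)
      (EuclideanSpace.single i 1 - EuclideanSpace.single j 1))
    (hA : A.PosSemidef) (hB : B.PosSemidef)
    (hvar : ∀ i, B i i ≤ A i i) (hcov : ∀ i j, i ≠ j → A i j ≤ B i j) :
    ∫ x, f x ∂multivariateGaussian 0 B ≤ ∫ x, f x ∂multivariateGaussian 0 A := by
  have hsymm : (B - A).IsSymm := isHermitian_iff_isSymm.1 (hB.isHermitian.sub hA.isHermitian)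
  have hincr (p : ι × ι) : SymmIncrementLE f (entryPlus p.1 p.2 ((B - A) p.1 p.2))
      (entryMinus p.1 p.2 ((B - A) p.1 p.2)) := by
    obtain ⟨i, j⟩ := p
    obtain rfl | hij := eq_or_ne i j
    · exact symmIncrementLE_entry_of_nonpos (sub_nonpos.2 (hvar i)) (hdiag i)
    · exact symmIncrementLE_entry_of_nonneg (sub_nonneg.2 (hcov i j hij)) (hoff i j hij)
  refine integral_le_of_add_sum_outerSquare_eq hf hA hB hincr ?_
  rw [add_comm A, ← sub_eq_sub_iff_add_eq_add, ← Finset.sum_sub_distrib,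
    sum_outerSquare_entryPlus_sub_outerSquare_entryMinus hsymm]

end Kahane

section BasisExchange

variable {ι : Type*}

lemma exists_exchange_of_mem_of_notMem {I J : Finset ι} (hIJ : I.card = J.card) {i j : ι}
    (hij : i ≠ j) (hiI : i ∈ I) (hjI : j ∈ I) (hiJ : i ∉ J) (hjJ : j ∉ J) :
    ∃ I' J' : Finset ι, I'.card = I.card ∧ J'.card = J.card ∧
      i ∈ I' ∧ j ∉ I' ∧ i ∉ J' ∧ j ∈ J' ∧
      ∀ x : ι → ℝ, ∑ k ∈ I', x k + ∑ k ∈ J', x k = ∑ k ∈ I, x k + ∑ k ∈ J, x k := by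
  classical
  obtain ⟨k, hk⟩ : (J \ I).Nonempty := by
    rw [← Finset.card_pos, ← Finset.card_sdiff_comm hIJ, Finset.card_pos]
    exact ⟨i, Finset.mem_sdiff.2 ⟨hiI, hiJ⟩⟩
  obtain ⟨hkJ, hkI⟩ := Finset.mem_sdiff.1 hk
  have hkj : j ≠ k := ne_of_mem_of_not_mem hjI hkI
  refine ⟨insert k (I.erase j), insert j (J.erase k), ?_, ?_, ?_, ?_, ?_, ?_, fun x ↦ ?_⟩
  · rw [Finset.card_insert_of_notMem (by simp [hkI]), Finset.card_erase_add_one hjI]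
  · rw [Finset.card_insert_of_notMem (by simp [hjJ]), Finset.card_erase_add_one hkJ]
  · simp [hij, hiI]
  · simp [hkj]
  · simp [hij, hiJ]
  · simp
  · rw [Finset.sum_insert (by simp [hkI]), Finset.sum_insert (by simp [hjJ]),
      ← Finset.add_sum_erase I x hjI, ← Finset.add_sum_erase J x hkJ]
    ring

lemma exists_exchange [DecidableEq ι] {I J : Finset ι} (hIJ : I.card = J.card) {i j : ι}
    (hij : i ≠ j) :
    ∃ I' J' : Finset ι, I'.card = I.card ∧ J'.card = J.card ∧
      (∀ x : ι → ℝ, ∑ k ∈ I', x k + ∑ k ∈ J', x k = ∑ k ∈ I, x k + ∑ k ∈ J, x k) ∧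
      ∑ k ∈ I, (Pi.single i 1 + Pi.single j 1 : ι → ℝ) k
          - ∑ k ∈ J, (Pi.single i 1 + Pi.single j 1 : ι → ℝ) k
        ≤ ∑ k ∈ I', (Pi.single i 1 - Pi.single j 1 : ι → ℝ) k
          - ∑ k ∈ J', (Pi.single i 1 - Pi.single j 1 : ι → ℝ) k := by
  simp only [Pi.add_apply, Pi.sub_apply, Finset.sum_add_distrib, Finset.sum_sub_distrib,
    Finset.sum_pi_single']
  -- Unless `I \ J` contains both `i` and `j`, already `(I, J)` or `(J, I)` works.
  by_cases hj : j ∈ I → j ∈ J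
  · refine ⟨I, J, rfl, rfl, fun _ ↦ rfl, ?_⟩
    split_ifs <;> first | linarith | tauto
  by_cases hi : i ∈ I → i ∈ J
  · refine ⟨J, I, hIJ.symm, hIJ, fun _ ↦ add_comm _ _, ?_⟩
    split_ifs <;> first | linarith | tauto
  push Not at hi hj
  obtain ⟨I', J', hI', hJ', hiI', hjI', hiJ', hjJ', hsum⟩ :=
    exists_exchange_of_mem_of_notMem hIJ hij hi.1 hj.1 hi.2 hj.2
  exact ⟨I', J', hI', hJ', hsum, by simp [hi, hj, hiI', hjI', hiJ', hjJ']⟩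

end BasisExchange

section SumLargest

variable {ι : Type*}

/-- The sum of the `ℓ` largest coordinates of `x`, written `S_ℓ(x)` in the paper. It is the
meaningless value `sSup ∅ = 0` when `x` has fewer than `ℓ` coordinates. -/
noncomputable def sumLargest (ℓ : ℕ) (x : ι → ℝ) : ℝ :=
  sSup {s : ℝ | ∃ I : Finset ι, I.card = ℓ ∧ s = ∑ i ∈ I, x i}

lemma finite_setOf_sum_card_eq [Finite ι] (ℓ : ℕ) (x : ι → ℝ) :
    {s : ℝ | ∃ I : Finset ι, I.card = ℓ ∧ s = ∑ i ∈ I, x i}.Finite := by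
  refine (Set.finite_range fun I : Finset ι ↦ ∑ i ∈ I, x i).subset ?_
  rintro _ ⟨I, -, rfl⟩
  exact ⟨I, rfl⟩

lemma sum_le_sumLargest [Finite ι] {ℓ : ℕ} (x : ι → ℝ) {I : Finset ι} (hI : I.card = ℓ) :
    ∑ i ∈ I, x i ≤ sumLargest ℓ x :=
  le_csSup (finite_setOf_sum_card_eq ℓ x).bddAbove ⟨I, hI, rfl⟩

variable [Fintype ι] {ℓ : ℕ}

lemma exists_sumLargest_eq_sum (hℓ : ℓ ≤ Fintype.card ι) (x : ι → ℝ) :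
    ∃ I : Finset ι, I.card = ℓ ∧ sumLargest ℓ x = ∑ i ∈ I, x i := by
  obtain ⟨I, -, hI⟩ := Finset.exists_subset_card_eq (s := Finset.univ) hℓ
  exact Set.Nonempty.csSup_mem (s := {s | ∃ I : Finset ι, I.card = ℓ ∧ s = ∑ i ∈ I, x i})
    ⟨_, I, hI, rfl⟩ (finite_setOf_sum_card_eq ℓ x)

lemma lipschitzWith_sumLargest (hℓ : ℓ ≤ Fintype.card ι) :
    LipschitzWith ℓ (sumLargest ℓ : (ι → ℝ) → ℝ) := by
  refine LipschitzWith.of_le_add_mul _ fun x y ↦ ?_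
  obtain ⟨I, hI, hx⟩ := exists_sumLargest_eq_sum hℓ x
  calc sumLargest ℓ x = ∑ i ∈ I, x i := hx
    _ ≤ ∑ i ∈ I, (y i + dist x y) := Finset.sum_le_sum fun i _ ↦ by
        linarith [le_abs_self (x i - y i), Real.dist_eq (x i) (y i), dist_le_pi_dist x y i]
    _ = ∑ i ∈ I, y i + ℓ * dist x y := by simp [Finset.sum_add_distrib, hI]
    _ ≤ sumLargest ℓ y + ℓ * dist x y := by gcongr; exact sum_le_sumLargest y hI

lemma symmIncrementLE_sumLargest_zero (hℓ : ℓ ≤ Fintype.card ι) (v : ι → ℝ) :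
    SymmIncrementLE (sumLargest ℓ) 0 v := fun w a ↦ by
  obtain ⟨I, hI, hw⟩ := exists_sumLargest_eq_sum hℓ w
  calc sumLargest ℓ (w + a • 0) + sumLargest ℓ (w - a • 0)
      = ∑ i ∈ I, (w + a • v) i + ∑ i ∈ I, (w - a • v) i := by
        simp [hw, Finset.sum_add_distrib]
    _ ≤ sumLargest ℓ (w + a • v) + sumLargest ℓ (w - a • v) :=
        add_le_add (sum_le_sumLargest _ hI) (sum_le_sumLargest _ hI)

lemma symmIncrementLE_sumLargest_pair [DecidableEq ι] (hℓ : ℓ ≤ Fintype.card ι) {i j : ι}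
    (hij : i ≠ j) : SymmIncrementLE (sumLargest ℓ) (Pi.single i 1 + Pi.single j 1 : ι → ℝ)
      (Pi.single i 1 - Pi.single j 1) := by
  intro w a
  set u : ι → ℝ := Pi.single i 1 + Pi.single j 1
  set v : ι → ℝ := Pi.single i 1 - Pi.single j 1
  wlog ha : 0 ≤ a generalizing a
  · have h := this (-a) (by linarith)
    simp only [neg_smul, sub_neg_eq_add, ← sub_eq_add_neg] at h
    linarith
  obtain ⟨I, hI, hIw⟩ := exists_sumLargest_eq_sum hℓ (w + a • u)
  obtain ⟨J, hJ, hJw⟩ := exists_sumLargest_eq_sum hℓ (w - a • u)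
  obtain ⟨I', J', hI', hJ', hsum, hle⟩ := exists_exchange (hI.trans hJ.symm) hij
  calc sumLargest ℓ (w + a • u) + sumLargest ℓ (w - a • u)
      = ∑ k ∈ I, w k + ∑ k ∈ J, w k + a * (∑ k ∈ I, u k - ∑ k ∈ J, u k) := by
        rw [hIw, hJw]
        simp only [Pi.add_apply, Pi.sub_apply, Pi.smul_apply, smul_eq_mul,
          Finset.sum_add_distrib, Finset.sum_sub_distrib, ← Finset.mul_sum]
        ring
    _ ≤ ∑ k ∈ I', w k + ∑ k ∈ J', w k + a * (∑ k ∈ I', v k - ∑ k ∈ J', v k) := by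
        rw [hsum]
        gcongr
    _ = ∑ k ∈ I', (w + a • v) k + ∑ k ∈ J', (w - a • v) k := by
        simp only [Pi.add_apply, Pi.sub_apply, Pi.smul_apply, smul_eq_mul,
          Finset.sum_add_distrib, Finset.sum_sub_distrib, ← Finset.mul_sum]
        ring
    _ ≤ sumLargest ℓ (w + a • v) + sumLargest ℓ (w - a • v) :=
        add_le_add (sum_le_sumLargest _ (hI'.trans hI)) (sum_le_sumLargest _ (hJ'.trans hJ))

end SumLargest

section CenteredGaussianVec

open Matrix

variable {Ω : Type*} [MeasurableSpace Ω] {P : Measure Ω}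

/-- The matrix of second moments `E[X i * X j]`, which is the covariance matrix of a centered
random vector `X`. -/
noncomputable def secondMomentMatrix {ι : Type*} (P : Measure Ω) (X : ι → Ω → ℝ) : Matrix ι ι ℝ :=
  of fun i j ↦ ∫ ω, X i ω * X j ω ∂P

lemma secondMomentMatrix_apply {ι : Type*} (X : ι → Ω → ℝ) (i j : ι) :
    secondMomentMatrix P X i j = ∫ ω, X i ω * X j ω ∂P :=
  rfl

lemma dotProduct_secondMomentMatrix_mulVec {ι : Type*} [Fintype ι] {X : ι → Ω → ℝ}
    (hX : ∀ i, MemLp (X i) 2 P) (a : ι → ℝ) :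
    a ⬝ᵥ secondMomentMatrix P X *ᵥ a = ∫ ω, (∑ i, a i * X i ω) ^ 2 ∂P := by
  have hint (i j : ι) : Integrable (fun ω ↦ a i * X i ω * (a j * X j ω)) P :=
    ((hX i).const_mul (a i)).integrable_mul ((hX j).const_mul (a j))
  have hterm (i j : ι) :
      ∫ ω, a i * X i ω * (a j * X j ω) ∂P = a i * (secondMomentMatrix P X i j * a j) := by
    rw [secondMomentMatrix_apply, ← mul_assoc, mul_right_comm, ← integral_const_mul]
    simp_rw [mul_mul_mul_comm (a i)]
  simp_rw [sq, Finset.sum_mul_sum]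
  rw [integral_finsetSum _ fun i _ ↦ integrable_finsetSum _ fun j _ ↦ hint i j]
  simp_rw [integral_finsetSum _ fun j _ ↦ hint _ j, hterm, dotProduct, mulVec, dotProduct,
    Finset.mul_sum]

lemma posSemidef_secondMomentMatrix {ι : Type*} [Finite ι] {X : ι → Ω → ℝ}
    (hX : ∀ i, MemLp (X i) 2 P) : (secondMomentMatrix P X).PosSemidef := by
  have := Fintype.ofFinite ι
  refine .of_dotProduct_mulVec_nonneg ?_ fun a ↦ ?_
  · refine Matrix.IsHermitian.ext fun i j ↦ ?_
    simp [secondMomentMatrix_apply, mul_comm]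
  · rw [star_trivial, dotProduct_secondMomentMatrix_mulVec hX]
    exact integral_nonneg fun ω ↦ sq_nonneg _

namespace IsCenteredGaussianVec

variable {n : ℕ} {X : Fin n → Ω → ℝ}

lemma exists_hasLaw (hX : IsCenteredGaussianVec P X) (i : Fin n) :
    ∃ v, HasLaw (X i) (gaussianReal 0 v) P := by
  have h := hX (Pi.single i 1)
  have hcoord : (fun ω ↦ ∑ j, (Pi.single i 1 : Fin n → ℝ) j * X j ω) = X i := by
    ext ω
    simp [Pi.single_apply]
  rw [hcoord] at h
  exact ⟨_, .of_map_ne_zero (h ▸ IsProbabilityMeasure.ne_zero _), h⟩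

lemma isProbabilityMeasure (hX : IsCenteredGaussianVec P X) : IsProbabilityMeasure P := by
  have : IsProbabilityMeasure (P.map fun ω ↦ ∑ i, (0 : Fin n → ℝ) i * X i ω) := by
    rw [hX 0]
    infer_instance
  exact Measure.isProbabilityMeasure_of_map
    (fun ω ↦ ∑ i, (0 : Fin n → ℝ) i * X i ω)

lemma aemeasurable (hX : IsCenteredGaussianVec P X) (i : Fin n) : AEMeasurable (X i) P :=
  (hX.exists_hasLaw i).choose_spec.aemeasurable

lemma memLp_two (hX : IsCenteredGaussianVec P X) (i : Fin n) : MemLp (X i) 2 P := by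
  obtain ⟨v, hv⟩ := hX.exists_hasLaw i
  have h := memLp_id_gaussianReal' (μ := 0) (v := v) 2 (by simp)
  rw [← hv.map_eq] at h
  exact h.comp_of_map hv.aemeasurable

lemma hasLaw (hX : IsCenteredGaussianVec P X) :
    HasLaw (fun ω ↦ WithLp.toLp 2 fun i ↦ X i ω)
      (multivariateGaussian 0 (secondMomentMatrix P X)) P := by
  have := hX.isProbabilityMeasure
  have hXm := hX.aemeasurable
  set Z : Ω → EuclideanSpace ℝ (Fin n) := fun ω ↦ WithLp.toLp 2 fun i ↦ X i ω
  have hZ : AEMeasurable Z P :=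
    (WithLp.measurable_toLp 2 _).comp_aemeasurable (aemeasurable_pi_lambda _ hXm)
  refine ⟨hZ, ?_⟩
  have := Measure.isProbabilityMeasure_map hZ
  apply Measure.ext_of_charFun
  ext t
  have hsum : AEMeasurable (fun ω ↦ ∑ i, t i * X i ω) P := by fun_prop
  calc charFun (P.map Z) t
      = charFun (P.map fun ω ↦ ∑ i, t i * X i ω) 1 := by
        rw [charFun_apply, integral_map hZ (by fun_prop), charFun_apply_real,
          integral_map hsum (by fun_prop)]
        simp [Z, PiLp.inner_apply]
    _ = charFun (multivariateGaussian 0 (secondMomentMatrix P X)) t := by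
        rw [hX t, charFun_gaussianReal, Real.coe_toNNReal _ (integral_nonneg fun ω ↦ sq_nonneg _),
          charFun_multivariateGaussian (posSemidef_secondMomentMatrix hX.memLp_two),
          dotProduct_secondMomentMatrix_mulVec hX.memLp_two]
        simp

end IsCenteredGaussianVec

end CenteredGaussianVec

section SumLargestGaussian

lemma lipschitzWith_sumLargest_ofLp {ι : Type*} [Fintype ι] {ℓ : ℕ} (hℓ : ℓ ≤ Fintype.card ι) :
    LipschitzWith (ℓ * 1) fun x : EuclideanSpace ℝ ι ↦ sumLargest ℓ x.ofLp :=
  (lipschitzWith_sumLargest hℓ).comp (PiLp.lipschitzWith_ofLp 2 _)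

lemma integral_sumLargest_multivariateGaussian_le {ι : Type*} [Fintype ι] [DecidableEq ι] {ℓ : ℕ}
    (hℓ : ℓ ≤ Fintype.card ι) {A B : Matrix ι ι ℝ} (hA : A.PosSemidef) (hB : B.PosSemidef)
    (hvar : ∀ i, B i i ≤ A i i) (hcov : ∀ i j, i ≠ j → A i j ≤ B i j) :
    ∫ x, sumLargest ℓ x.ofLp ∂multivariateGaussian 0 B
      ≤ ∫ x, sumLargest ℓ x.ofLp ∂multivariateGaussian 0 A :=
  integral_multivariateGaussian_le (lipschitzWith_sumLargest_ofLp hℓ)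
    (fun i w a ↦ symmIncrementLE_sumLargest_zero hℓ (Pi.single i 1) w.ofLp a)
    (fun _ _ hij w a ↦ symmIncrementLE_sumLargest_pair hℓ hij w.ofLp a) hA hB hvar hcov

lemma IsCenteredGaussianVec.integral_sumLargest {Ω : Type*} [MeasurableSpace Ω] {P : Measure Ω}
    {n ℓ : ℕ} {X : Fin n → Ω → ℝ} (hX : IsCenteredGaussianVec P X) (hℓ : ℓ ≤ n) :
    ∫ ω, sumLargest ℓ (fun i ↦ X i ω) ∂P
      = ∫ x, sumLargest ℓ x.ofLp ∂multivariateGaussian 0 (secondMomentMatrix P X) :=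
  integral_comp_of_hasLaw hX.hasLaw <| integrable_multivariateGaussian_of_lipschitzWith
    (lipschitzWith_sumLargest_ofLp (by rwa [Fintype.card_fin])) 0 _

end SumLargestGaussian

theorem expectation_sum_of_largest_comparison_general {Ω Ω' : Type*} [MeasurableSpace Ω]
    [MeasurableSpace Ω'] {P : Measure Ω} {P' : Measure Ω'} {n : ℕ} {X : Fin n → Ω → ℝ}
    {Y : Fin n → Ω' → ℝ} (hX : IsCenteredGaussianVec P X) (hY : IsCenteredGaussianVec P' Y)
    (hvar : ∀ i, ∫ ω, (Y i ω) ^ 2 ∂P' ≤ ∫ ω, (X i ω) ^ 2 ∂P)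
    (hcov : ∀ i j, i ≠ j → ∫ ω, X i ω * X j ω ∂P ≤ ∫ ω, Y i ω * Y j ω ∂P')
    {ℓ : ℕ} (hℓ : ℓ ≤ n) :
    ∫ ω, sumLargest ℓ (fun i ↦ Y i ω) ∂P' ≤ ∫ ω, sumLargest ℓ (fun i ↦ X i ω) ∂P := by
  rw [hX.integral_sumLargest hℓ, hY.integral_sumLargest hℓ]
  refine integral_sumLargest_multivariateGaussian_le (by rwa [Fintype.card_fin])
    (posSemidef_secondMomentMatrix hX.memLp_two) (posSemidef_secondMomentMatrix hY.memLp_two)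
    (fun i ↦ ?_) hcov
  simpa only [secondMomentMatrix_apply, sq] using hvar i

/-- Comparison in expectation for the sum of the `ℓ` largest coordinates: if `X`, `Y` are
centered Gaussian vectors with equal variances and `Cov(X_i,X_j) ≤ Cov(Y_i,Y_j)` for all
`i, j`, and `S_ℓ(Z) = max {∑_{i∈I} Z_i : |I| = ℓ}`, then `E[S_ℓ(X)] ≥ E[S_ℓ(Y)]` for every
`1 ≤ ℓ ≤ n`. -/
theorem expectation_sum_of_largest_comparison {Ω : Type*} [MeasurableSpace Ω] (P : Measure Ω)
    [IsProbabilityMeasure P] (n : ℕ) (X Y : Fin n → Ω → ℝ)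
    (hXm : ∀ i, Measurable (X i)) (hYm : ∀ i, Measurable (Y i))
    (hX : IsCenteredGaussianVec P X) (hY : IsCenteredGaussianVec P Y)
    (hvar : ∀ i, ∫ ω, (X i ω) ^ 2 ∂P = ∫ ω, (Y i ω) ^ 2 ∂P)
    (hcov : ∀ i j, ∫ ω, X i ω * X j ω ∂P ≤ ∫ ω, Y i ω * Y j ω ∂P)
    (ℓ : ℕ) (hℓ1 : 1 ≤ ℓ) (hℓn : ℓ ≤ n) :
    ∫ ω, sSup {s : ℝ | ∃ I : Finset (Fin n), I.card = ℓ ∧ s = ∑ i ∈ I, Y i ω} ∂P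
      ≤ ∫ ω, sSup {s : ℝ | ∃ I : Finset (Fin n), I.card = ℓ ∧ s = ∑ i ∈ I, X i ω} ∂P :=
  expectation_sum_of_largest_comparison_general hX hY (fun i ↦ (hvar i).ge)
    (fun i j _ ↦ hcov i j) hℓn
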